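/- arXiv:2602.15168 — 3 statements merged into one kernel-verified Lean document; each statement's English description precedes it below -/
import Mathlib

section
/- Let G be a finite group, H a normal subgroup of G, and φ : H → ℂˣ a group homomorphism whose kernel contains the commutator subgroup ⁅H, G⁆. Then there exists an irreducible finite-dimensional complex representation α of G having scalar character φ on H, i.e., satisfying α(h) = φ(h)·id for all h ∈ H. -/
open scoped TensorProduct

/-- A representation is irreducible: the space is nontrivial and the only invariant
subspaces are `⊥` and `⊤`. -/
def IsIrrep {G : Type*} [Group G] {V : Type*} [AddCommGroup V] [Module ℂ V]
    (ρ : Representation ℂ G V) : Prop :=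
  Nontrivial V ∧
    ∀ p : Submodule ℂ V, (∀ g : G, ∀ v ∈ p, ρ g v ∈ p) → p = ⊥ ∨ p = ⊤

/-- `ρ` has scalar character `φ` on the subgroup `H`: every `h ∈ H` acts as the scalar `φ h`. -/
def HasScalarChar {G : Type*} [Group G] {V : Type*} [AddCommGroup V] [Module ℂ V]
    (ρ : Representation ℂ G V) (H : Subgroup G) (φ : H →* ℂˣ) : Prop :=
  ∀ h : H, ρ (h : G) = (φ h : ℂ) • (1 : Module.End ℂ V)

/-- Isomorphism of representations: an equivariant linear equivalence. -/
def RepIso {G : Type*} [Group G] {V W : Type*} [AddCommGroup V] [Module ℂ V]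
    [AddCommGroup W] [Module ℂ W]
    (ρ : Representation ℂ G V) (σ : Representation ℂ G W) : Prop :=
  ∃ e : V ≃ₗ[ℂ] W, ∀ g v, e (ρ g v) = σ g (e v)

/-- `γ` is a constituent of `ρ`: there is an injective equivariant linear map from the
space of `γ` to the space of `ρ`. -/
def IsConstituent {G : Type*} [Group G] {V W : Type*} [AddCommGroup V] [Module ℂ V]
    [AddCommGroup W] [Module ℂ W]
    (γ : Representation ℂ G V) (ρ : Representation ℂ G W) : Prop :=
  ∃ f : V →ₗ[ℂ] W, Function.Injective f ∧ ∀ g v, f (γ g v) = ρ g (f v)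

/-! Let `Q = G ⧸ ⁅H, G⁆`. The image of `H` is central in `Q`, and `φ` kills the kernel of `H → Q`.
The space of functions `f : Q → k` with `f (h x) = φ h • f x` is therefore nonzero, and in
`(h • f) x = f (x h) = f (h x) = φ h • f x` centrality lets `H` act through `φ`.
Pull this representation of `Q` back along `G → Q` and take an irreducible subrepresentation. -/

section Subrepresentation

variable {k G V : Type*}

/-- The correspondence between subrepresentations of a subrepresentation `σ` and subrepresentations
of the ambient representation contained in `σ`, given by image and preimage under the inclusion. -/
def subrepresentationOrderIsoIic [Semiring k] [Monoid G] [AddCommMonoid V] [Module k V]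
    {ρ : Representation k G V} (σ : Subrepresentation ρ) :
    Subrepresentation σ.toRepresentation ≃o Set.Iic σ where
  toFun τ :=
    { val :=
        { toSubmodule := τ.toSubmodule.map σ.toSubmodule.subtype
          apply_mem_toSubmodule := by
            rintro g _ ⟨v, hv, rfl⟩
            exact ⟨_, τ.apply_mem_toSubmodule g hv, rfl⟩ }
      property := Submodule.map_subtype_le σ.toSubmodule τ.toSubmodule }
  invFun τ :=
    { toSubmodule := τ.1.toSubmodule.comap σ.toSubmodule.subtype
      apply_mem_toSubmodule := fun g _ hv => τ.1.apply_mem_toSubmodule g hv }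
  left_inv τ := Subrepresentation.toSubmodule_injective <|
    Submodule.comap_map_eq_of_injective σ.toSubmodule.subtype_injective τ.toSubmodule
  right_inv τ := Subtype.ext <| Subrepresentation.toSubmodule_injective <| by
    simpa only [Submodule.map_comap_subtype] using inf_eq_right.mpr τ.2
  map_rel_iff' {τ υ} :=
    Submodule.map_le_map_iff_of_injective σ.toSubmodule.subtype_injective τ.toSubmodule
      υ.toSubmodule

variable [Field k] [Monoid G] [AddCommGroup V] [Module k V]

theorem isIrreducible_toRepresentation_iff_isAtom {ρ : Representation k G V}
    (σ : Subrepresentation ρ) : σ.toRepresentation.IsIrreducible ↔ IsAtom σ :=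
  (subrepresentationOrderIsoIic σ).isSimpleOrder_iff.trans Set.isSimpleOrder_Iic_iff_isAtom

theorem exists_isIrreducible_toRepresentation (ρ : Representation k G V) [FiniteDimensional k V]
    [Nontrivial V] : ∃ σ : Subrepresentation ρ, σ.toRepresentation.IsIrreducible := by
  have : WellFoundedLT (Subrepresentation ρ) :=
    StrictMono.wellFoundedLT (f := Subrepresentation.toSubmodule) fun _ _ h => h
  have : IsAtomic (Subrepresentation ρ) := isAtomic_of_orderBot_wellFounded_lt wellFounded_lt
  have : Nontrivial (Subrepresentation ρ) :=
    ⟨⊥, ⊤, fun h => bot_ne_top (congrArg Subrepresentation.toSubmodule h)⟩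
  obtain ⟨σ, hσ⟩ := IsAtomic.exists_atom (Subrepresentation ρ)
  exact ⟨σ, (isIrreducible_toRepresentation_iff_isAtom σ).mpr hσ⟩

end Subrepresentation

theorem exists_fdRep_isIrreducible_preserving_scalars.{u, v} {k V : Type u} {G : Type v} [Field k]
    [Monoid G] [AddCommGroup V] [Module k V] [FiniteDimensional k V] [Nontrivial V]
    (ρ : Representation k G V) :
    ∃ α : FDRep k G, Representation.IsIrreducible α.ρ ∧
      ∀ (g : G) (c : k), ρ g = c • 1 → α.ρ g = c • 1 := by
  obtain ⟨σ, hσ⟩ := exists_isIrreducible_toRepresentation ρ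
  refine ⟨FDRep.of σ.toRepresentation, hσ, fun g c hg => ?_⟩
  exact LinearMap.ext fun v => Subtype.ext (LinearMap.congr_fun hg v)

theorem isIrrep_of_isIrreducible {G V : Type*} [Group G] [AddCommGroup V] [Module ℂ V]
    {ρ : Representation ℂ G V} (hρ : ρ.IsIrreducible) : IsIrrep ρ := by
  refine ⟨not_subsingleton_iff_nontrivial.mp fun _ => ?_, fun p hp => ?_⟩
  · exact bot_ne_top (α := Subrepresentation ρ)
      (Subrepresentation.toSubmodule_injective (Subsingleton.elim _ _))
  · let σ : Subrepresentation ρ := ⟨p, fun g v => hp g v⟩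
    exact (eq_bot_or_eq_top σ).imp (congrArg Subrepresentation.toSubmodule)
      (congrArg Subrepresentation.toSubmodule)

section Coinduced

open Representation

variable {k H Q A : Type*}

theorem nontrivial_coindV [Group H] [Group Q] [Semiring k] [AddCommMonoid A] [Module k A]
    [Nontrivial A] (i : H →* Q) (σ : Representation k H A) (hσ : i.ker ≤ σ.ker) :
    Nontrivial (coindV i σ) := by
  obtain ⟨a, ha⟩ := exists_ne (0 : A)
  have hfac : (fun h => σ h a).FactorsThrough i := fun h h' hh =>
    LinearMap.congr_fun (σ.eq_iff.mpr (hσ (i.eq_iff.mp hh))) a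
  set f : Q → A := Function.extend i (fun h => σ h a) 0
  have hf_range (h : H) : f (i h) = σ h a := hfac.extend_apply 0 h
  have hf_compl (x : Q) (hx : ¬∃ h, i h = x) : f x = 0 := Function.extend_apply' _ _ x hx
  have hf : f ∈ coindV i σ := by
    intro h x
    by_cases hx : ∃ h', i h' = x
    · obtain ⟨h', rfl⟩ := hx
      rw [← map_mul, hf_range, hf_range, map_mul, Module.End.mul_apply]
    · have hhx : ¬∃ h', i h' = i h * x := fun ⟨h', hh'⟩ =>
        hx ⟨h⁻¹ * h', by rw [map_mul, map_inv, hh', inv_mul_cancel_left]⟩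
      rw [hf_compl x hx, hf_compl _ hhx, map_zero]
  have hf_one : f 1 = a := by
    rw [← map_one i, hf_range, map_one, Module.End.one_apply]
  refine nontrivial_of_ne (⟨f, hf⟩ : coindV i σ) 0 fun h => ha ?_
  rw [← hf_one]
  exact congrFun (congrArg Subtype.val h) 1

theorem finite_coindV [Group H] [Group Q] [Ring k] [IsNoetherianRing k] [AddCommGroup A]
    [Module k A] [Module.Finite k A] (i : H →* Q) [i.range.FiniteIndex]
    (σ : Representation k H A) : Module.Finite k (coindV i σ) := by
  let evalReps : coindV i σ →ₗ[k] (Q ⧸ i.range → A) :=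
    LinearMap.funLeft k A (fun q => q.out⁻¹) ∘ₗ (coindV i σ).subtype
  refine Module.Finite.of_injective evalReps fun f f' hff' => Subtype.ext (funext fun x => ?_)
  obtain ⟨⟨_, h, rfl⟩, hout⟩ := QuotientGroup.mk_out_eq_mul i.range x⁻¹
  have hx : x = i h * (QuotientGroup.mk x⁻¹ : Q ⧸ i.range).out⁻¹ := by
    rw [hout, mul_inv_rev, inv_inv, mul_inv_cancel_left]
  rw [hx, f.2, f'.2]
  exact congrArg (σ h) (congrFun hff' (QuotientGroup.mk x⁻¹))

theorem coind_eq_smul_one_of_mem_center [Monoid H] [Monoid Q] [CommSemiring k]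
    [AddCommMonoid A] [Module k A] (i : H →* Q) (σ : Representation k H A) {h : H} {c : k}
    (hi : i h ∈ Set.center Q) (hσ : σ h = c • 1) : coind i σ (i h) = c • 1 := by
  ext f x
  calc f.1 (x * i h) = f.1 (i h * x) := by rw [Semigroup.mem_center_iff.mp hi x]
    _ = σ h (f.1 x) := f.2 h x
    _ = c • f.1 x := by rw [hσ, LinearMap.smul_apply, Module.End.one_apply]

end Coinduced

section CommutatorTop

open scoped commutatorElement

variable {G : Type*} [Group G]

theorem commutator_top_normal (H : Subgroup G) : ⁅H, (⊤ : Subgroup G)⁆.Normal := by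
  rw [← Subgroup.normalizer_eq_top_iff, eq_top_iff, Subgroup.commutator_def,
    Subgroup.le_normalizer_closure_iff]
  rintro x - _ ⟨h, hh, g, -, rfl⟩
  have hconj : x * ⁅h, g⁆ * x⁻¹ = ⁅h, x⁆⁻¹ * ⁅h, x * g⁆ := by
    simp only [commutatorElement_mul_right_eq_mul_conj, mul_assoc, inv_mul_cancel_left]
  rw [hconj, ← Subgroup.commutator_def]
  exact mul_mem (inv_mem (Subgroup.commutator_mem_commutator hh (Subgroup.mem_top x)))
    (Subgroup.commutator_mem_commutator hh (Subgroup.mem_top (x * g)))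

theorem mk_mem_center_of_commutator_top_le {H N : Subgroup G} [N.Normal]
    (hN : ⁅H, (⊤ : Subgroup G)⁆ ≤ N) {h : G} (hh : h ∈ H) :
    QuotientGroup.mk' N h ∈ Subgroup.center (G ⧸ N) := by
  have hmap : ⁅H.map (QuotientGroup.mk' N), (⊤ : Subgroup (G ⧸ N))⁆ = ⊥ := by
    rw [← Subgroup.map_top_of_surjective _ (QuotientGroup.mk'_surjective N),
      ← Subgroup.map_commutator, Subgroup.map_eq_bot_iff, QuotientGroup.ker_mk']
    exact hN
  exact Subgroup.commutator_top_right_eq_bot_iff_le_center.mp hmap (Subgroup.mem_map_of_mem _ hh)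

end CommutatorTop

theorem finiteIndex_map_of_surjective {G Q : Type*} [Group G] [Group Q] (H : Subgroup G)
    [H.FiniteIndex] {π : G →* Q} (hπ : Function.Surjective π) : (H.map π).FiniteIndex :=
  ⟨ne_zero_of_dvd_ne_zero Subgroup.FiniteIndex.index_ne_zero (H.index_map_dvd hπ)⟩

/-- The one-dimensional representation on `k` in which `h` acts as multiplication by `φ h`. -/
def characterRep {k H : Type*} [CommSemiring k] [Monoid H] (φ : H →* kˣ) : Representation k H k :=
  (DistribMulAction.toModuleEnd k k).comp φ

theorem characterRep_apply {k H : Type*} [CommSemiring k] [Monoid H] (φ : H →* kˣ) (h : H) :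
    characterRep φ h = (φ h : k) • 1 :=
  rfl

theorem exists_irrep_with_scalar_char_general.{u} {k G : Type u} [Field k] [Group G]
    (H : Subgroup G) [H.FiniteIndex] (φ : H →* kˣ)
    (hker : ∀ h : H, (h : G) ∈ ⁅H, (⊤ : Subgroup G)⁆ → φ h = 1) :
    ∃ α : FDRep k G, Representation.IsIrreducible α.ρ ∧ ∀ h : H, α.ρ (h : G) = (φ h : k) • 1 := by
  have := commutator_top_normal H
  let π := QuotientGroup.mk' ⁅H, (⊤ : Subgroup G)⁆
  let i := π.comp H.subtype
  have : i.range.FiniteIndex := by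
    rw [MonoidHom.range_comp, Subgroup.range_subtype]
    exact finiteIndex_map_of_surjective H (QuotientGroup.mk'_surjective _)
  have hφ : i.ker ≤ (characterRep φ).ker := by
    intro h hh
    have hφh : φ h = 1 := hker h ((QuotientGroup.eq_one_iff (h : G)).mp hh)
    rw [MonoidHom.mem_ker, characterRep_apply, hφh, Units.val_one, one_smul]
  have := nontrivial_coindV i (characterRep φ) hφ
  have := finite_coindV i (characterRep φ)
  let ρ : Representation k G _ := (Representation.coind i (characterRep φ)).comp π
  have hscalar (h : H) : ρ (h : G) = (φ h : k) • 1 :=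
    coind_eq_smul_one_of_mem_center i _ (mk_mem_center_of_commutator_top_le le_rfl h.2)
      (characterRep_apply φ h)
  obtain ⟨α, hα, hαρ⟩ := exists_fdRep_isIrreducible_preserving_scalars ρ
  exact ⟨α, hα, fun h => hαρ h (φ h) (hscalar h)⟩

/-- for a finite group `G`, a normal subgroup `H`, and a homomorphism
`φ : H → ℂˣ` trivial on `⁅H, G⁆`, there exists an irreducible finite-dimensional complex
representation of `G` with scalar character `φ` on `H`. -/
theorem exists_irrep_with_scalar_char
    (G : Type) [Group G] [Finite G] (H : Subgroup G) (hH : H.Normal)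
    (φ : H →* ℂˣ)
    (hker : ∀ h : H, (h : G) ∈ ⁅H, (⊤ : Subgroup G)⁆ → φ h = 1) :
    ∃ α : FDRep ℂ G, IsIrrep α.ρ ∧ HasScalarChar α.ρ H φ := by
  obtain ⟨α, hirr, hscalar⟩ := exists_irrep_with_scalar_char_general H φ hker
  exact ⟨α, isIrrep_of_isIrreducible hirr, hscalar⟩
end

section
/- Let G be a finite group, H a normal subgroup of G, and φ : H → ℂˣ a group homomorphism with ⁅H, G⁆ ≤ ker φ. Let (ρ, V) be a finite-dimensional complex representation of G and set V_φ = {v ∈ V : ρ(h)v = φ(h)v for all h ∈ H}. Then V_φ is a G-invariant subspace of V, every irreducible constituent of the subrepresentation V_φ has scalar character φ on H, and V_φ equals the sum of the isotypic components of V corresponding to the irreducible representations of G having scalar character φ on H. -/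
open scoped TensorProduct

/-- The `φ`-eigenspace of the `H`-action: vectors on which every `h ∈ H` acts by `φ h`. -/
def eigSubmodule {G : Type*} [Group G] {V : Type*} [AddCommGroup V] [Module ℂ V]
    (ρ : Representation ℂ G V) (H : Subgroup G) (φ : H →* ℂˣ) : Submodule ℂ V where
  carrier := {v | ∀ h : H, ρ (h : G) v = (φ h : ℂ) • v}
  add_mem' := by
    intro a b ha hb h
    simp [map_add, ha h, hb h, smul_add]
  zero_mem' := by
    intro h
    simp
  smul_mem' := by
    intro c v hv h
    simp only [map_smul, hv h, smul_comm c]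

/-- The restriction of a representation to an invariant submodule. -/
def restrictRep {G : Type*} [Group G] {V : Type*} [AddCommGroup V] [Module ℂ V]
    (ρ : Representation ℂ G V) (p : Submodule ℂ V)
    (hp : ∀ g : G, ∀ v ∈ p, ρ g v ∈ p) : Representation ℂ G p where
  toFun g := (ρ g).restrict (fun v hv => hp g v hv)
  map_one' := by
    ext v
    simp [LinearMap.restrict_apply]
  map_mul' g h := by
    ext v
    simp [LinearMap.restrict_apply]

/-!
If `g ∈ G` and `h ∈ H`, then `g⁻¹hg` differs from `h` by an element of `⁅H, G⁆`, so `φ` takes the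
same value on both and `ρ(h)ρ(g)v = ρ(g)ρ(g⁻¹hg)v = φ(h)ρ(g)v` for `v ∈ V_φ`: thus `V_φ` is
`G`-invariant. A subrepresentation has scalar character `φ` exactly when it lies in `V_φ`. By
semisimplicity (Maschke) `V_φ` is the sum of its irreducible subrepresentations, which are therefore
exactly those of `V` with scalar character `φ`.
-/

theorem map_conjNormal_eq {G M : Type*} [Group G] [Group M] {H : Subgroup G} [H.Normal] {χ : H →* M}
    (hχ : ⁅H, (⊤ : Subgroup G)⁆.subgroupOf H ≤ χ.ker) (g : G) (h : H) :
    χ (MulAut.conjNormal g h) = χ h := by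
  rw [eq_comm, ← mul_inv_eq_one, ← map_inv, ← map_mul]
  refine hχ (Subgroup.mem_subgroupOf.mpr ?_)
  have := Subgroup.commutator_mem_commutator h.2 (Subgroup.mem_top g)
  simpa [commutatorElement_def, mul_assoc] using this

theorem isAtomistic_of_orderIso {α β : Type*} [PartialOrder α] [PartialOrder β] [OrderBot α]
    [OrderBot β] [IsAtomistic β] (e : α ≃o β) : IsAtomistic α where
  isLUB_atoms a := by
    obtain ⟨s, hs, hatom⟩ := isLUB_atoms (e a)
    exact ⟨e ⁻¹' s, e.isLUB_preimage.mpr hs, fun b hb ↦ (e.isAtom_iff b).mp (hatom (e b) hb)⟩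

theorem apply_mem_sSup {R M : Type*} [Semiring R] [AddCommMonoid M] [Module R M]
    {f : Module.End R M} {S : Set (Submodule R M)} (hS : ∀ p ∈ S, ∀ v ∈ p, f v ∈ p) :
    ∀ v ∈ sSup S, f v ∈ sSup S := by
  change sSup S ≤ (sSup S).comap f
  exact sSup_le fun p hp v hv ↦ le_sSup hp (hS p hp v hv)

section Subrepresentation

variable {k G V : Type*} [Monoid G] [Field k] [AddCommGroup V] [Module k V]
  {ρ : Representation k G V}

theorem isAtomistic_subrepresentation (hρ : ρ.IsSemisimpleRepresentation) :
    IsAtomistic (Subrepresentation ρ) := by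
  rw [Representation.isSemisimpleRepresentation_iff_isSemisimpleModule_asModule] at hρ
  exact isAtomistic_of_orderIso Subrepresentation.subrepresentationSubmoduleOrderIso

theorem toSubmodule_eq_sSup_atoms [ρ.IsSemisimpleRepresentation] (σ : Subrepresentation ρ) :
    σ.toSubmodule = sSup (Subrepresentation.toSubmodule '' {τ | IsAtom τ ∧ τ ≤ σ}) := by
  apply le_antisymm
  · have := isAtomistic_subrepresentation (ρ := ρ) inferInstance
    obtain ⟨s, hs, hatom⟩ := isLUB_atoms σ
    -- `Subrepresentation ρ` carries no `sSup`, so the supremum is formed in `Submodule k V`.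
    let σ' : Subrepresentation ρ := ⟨sSup (Subrepresentation.toSubmodule '' {τ | IsAtom τ ∧ τ ≤ σ}),
      fun g ↦ apply_mem_sSup (Set.forall_mem_image.mpr fun τ _ ↦ τ.apply_mem_toSubmodule g)⟩
    have hσ' : σ' ∈ upperBounds s := fun τ hτ ↦
      le_sSup (a := τ.toSubmodule) ⟨τ, ⟨hatom τ hτ, hs.1 hτ⟩, rfl⟩
    exact hs.2 hσ'
  · exact sSup_le (Set.forall_mem_image.mpr fun τ hτ ↦ hτ.2)

end Subrepresentation

section ScalarCharacter

variable {G V W : Type*} [Group G] [AddCommGroup V] [Module ℂ V] [AddCommGroup W] [Module ℂ W]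
  {ρ : Representation ℂ G V} {σ : Representation ℂ G W} {H : Subgroup G} {φ : H →* ℂˣ}

theorem isIrrep_restrictRep_of_isAtom {τ : Subrepresentation ρ} (hτ : IsAtom τ) :
    IsIrrep (restrictRep ρ τ.toSubmodule τ.apply_mem_toSubmodule) := by
  refine ⟨Submodule.nontrivial_iff_ne_bot.mpr fun h ↦
    hτ.1 (Subrepresentation.toSubmodule_injective h), fun p hp ↦ ?_⟩
  let p' : Subrepresentation ρ := ⟨p.map τ.toSubmodule.subtype, by
    rintro g _ ⟨v, hv, rfl⟩
    exact ⟨_, hp g v hv, rfl⟩⟩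
  have hmap : Function.Injective (Submodule.map τ.toSubmodule.subtype) :=
    Submodule.map_injective_of_injective τ.toSubmodule.injective_subtype
  have hp' : p' ≤ τ := Submodule.map_subtype_le τ.toSubmodule p
  refine (hτ.le_iff.mp hp').imp (fun h ↦ hmap ?_) (fun h ↦ hmap ?_)
  · rw [Submodule.map_bot]
    exact congrArg Subrepresentation.toSubmodule h
  · rw [Submodule.map_subtype_top]
    exact congrArg Subrepresentation.toSubmodule h

theorem hasScalarChar_iff_range_le_eigSubmodule {f : W →ₗ[ℂ] V} (hf : Function.Injective f)
    (hfσ : ∀ g w, f (σ g w) = ρ g (f w)) :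
    HasScalarChar σ H φ ↔ LinearMap.range f ≤ eigSubmodule ρ H φ := by
  have hpointwise (h : H) (w : W) :
      σ h w = (φ h : ℂ) • w ↔ ρ h (f w) = (φ h : ℂ) • f w := by
    rw [← hf.eq_iff, hfσ, map_smul]
  constructor
  · rintro hσ _ ⟨w, rfl⟩ h
    exact (hpointwise h w).mp (LinearMap.congr_fun (hσ h) w)
  · intro hrange h
    ext w
    exact (hpointwise h w).mpr (hrange ⟨w, rfl⟩ h)

theorem hasScalarChar_restrictRep_iff {p : Submodule ℂ V} (hp : ∀ g, ∀ v ∈ p, ρ g v ∈ p) :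
    HasScalarChar (restrictRep ρ p hp) H φ ↔ p ≤ eigSubmodule ρ H φ := by
  have h := hasScalarChar_iff_range_le_eigSubmodule (σ := restrictRep ρ p hp) (H := H) (φ := φ)
    p.injective_subtype fun _ _ ↦ rfl
  rwa [p.range_subtype] at h

theorem apply_mem_eigSubmodule [H.Normal] (hφ : ⁅H, (⊤ : Subgroup G)⁆.subgroupOf H ≤ φ.ker)
    (g : G) : ∀ v ∈ eigSubmodule ρ H φ, ρ g v ∈ eigSubmodule ρ H φ := by
  intro v hv h
  have hcomm : (h : G) * g = g * (MulAut.conjNormal g⁻¹ h : H) := by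
    simp [mul_assoc]
  calc ρ h (ρ g v) = ρ g (ρ (MulAut.conjNormal g⁻¹ h : H) v) := by
        simp only [← Module.End.mul_apply, ← map_mul, hcomm]
    _ = (φ h : ℂ) • ρ g v := by rw [hv, map_conjNormal_eq hφ, map_smul]

theorem eigSubmodule_eq_sSup_isIrrep [ρ.IsSemisimpleRepresentation]
    (hinv : ∀ g, ∀ v ∈ eigSubmodule ρ H φ, ρ g v ∈ eigSubmodule ρ H φ) :
    eigSubmodule ρ H φ =
      sSup {p : Submodule ℂ V | ∃ hp : ∀ g : G, ∀ v ∈ p, ρ g v ∈ p,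
        IsIrrep (restrictRep ρ p hp) ∧ HasScalarChar (restrictRep ρ p hp) H φ} := by
  apply le_antisymm
  · refine (toSubmodule_eq_sSup_atoms ⟨eigSubmodule ρ H φ, hinv⟩).le.trans (sSup_le_sSup ?_)
    rintro _ ⟨τ, ⟨hatom, hle⟩, rfl⟩
    exact ⟨τ.apply_mem_toSubmodule, isIrrep_restrictRep_of_isAtom hatom,
      (hasScalarChar_restrictRep_iff _).mpr hle⟩
  · refine sSup_le ?_
    rintro p ⟨hp, -, hscalar⟩
    exact (hasScalarChar_restrictRep_iff hp).mp hscalar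

end ScalarCharacter

theorem eigSubmodule_invariant_and_isotypic_general.{u, v, w}
    {G : Type u} [Group G] {H : Subgroup G} [H.Normal] {φ : H →* ℂˣ}
    (hφ : ⁅H, (⊤ : Subgroup G)⁆.subgroupOf H ≤ φ.ker)
    {V : Type v} [AddCommGroup V] [Module ℂ V]
    (ρ : Representation ℂ G V) [ρ.IsSemisimpleRepresentation] :
    (∀ g : G, ∀ v ∈ eigSubmodule ρ H φ, ρ g v ∈ eigSubmodule ρ H φ) ∧
    (∀ (U : Type w) [AddCommGroup U] [Module ℂ U] (γ : Representation ℂ G U),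
      ∀ f : U →ₗ[ℂ] V, Function.Injective f → (∀ g u, f (γ g u) = ρ g (f u)) →
      LinearMap.range f ≤ eigSubmodule ρ H φ → HasScalarChar γ H φ) ∧
    eigSubmodule ρ H φ =
      sSup {p : Submodule ℂ V | ∃ hp : ∀ g : G, ∀ v ∈ p, ρ g v ∈ p,
        IsIrrep (restrictRep ρ p hp) ∧ HasScalarChar (restrictRep ρ p hp) H φ} := by
  have hinv := apply_mem_eigSubmodule (ρ := ρ) hφ
  exact ⟨hinv, fun _ _ _ _ _ hf hfγ ↦ (hasScalarChar_iff_range_le_eigSubmodule hf hfγ).mpr,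
    eigSubmodule_eq_sSup_isIrrep hinv⟩

/-- for `H ⊴ G` and `φ : H → ℂˣ` trivial on `⁅H,G⁆`, the subspace
`V_φ = {v | ρ(h)v = φ(h)v ∀ h ∈ H}` is `G`-invariant, every irreducible constituent of the
subrepresentation on `V_φ` has scalar character `φ` on `H`, and `V_φ` is the sum of all
irreducible subrepresentations of `V` with scalar character `φ` on `H` (i.e. of the
corresponding isotypic components). -/
theorem eigSubmodule_invariant_and_isotypic
    (G : Type) [Group G] [Finite G] (H : Subgroup G) (hH : H.Normal)
    (φ : H →* ℂˣ)
    (hker : ∀ h : H, (h : G) ∈ ⁅H, (⊤ : Subgroup G)⁆ → φ h = 1)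
    {V : Type} [AddCommGroup V] [Module ℂ V] [FiniteDimensional ℂ V]
    (ρ : Representation ℂ G V) :
    (∀ g : G, ∀ v ∈ eigSubmodule ρ H φ, ρ g v ∈ eigSubmodule ρ H φ) ∧
    (∀ (U : Type) [AddCommGroup U] [Module ℂ U] [FiniteDimensional ℂ U]
      (γ : Representation ℂ G U), IsIrrep γ →
      ∀ f : U →ₗ[ℂ] V, Function.Injective f → (∀ g u, f (γ g u) = ρ g (f u)) →
      LinearMap.range f ≤ eigSubmodule ρ H φ → HasScalarChar γ H φ) ∧
    eigSubmodule ρ H φ =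
      sSup {p : Submodule ℂ V | ∃ hp : ∀ g : G, ∀ v ∈ p, ρ g v ∈ p,
        IsIrrep (restrictRep ρ p hp) ∧ HasScalarChar (restrictRep ρ p hp) H φ} := by
  have ⟨hinv, hconst, hsup⟩ := eigSubmodule_invariant_and_isotypic_general hker ρ
  exact ⟨hinv, fun U _ _ _ γ _ ↦ hconst U γ, hsup⟩
end

section
/- Let G be a finite group, let U be the left regular representation of G on ℂ[G] (U_g |h⟩ = |g·h⟩), and for each one-dimensional character χ_α : G → ℂˣ define Z^α = Σ_{h∈G} χ_α(h⁻¹) |h⟩⟨h|, and for each g ∈ G define X_g = Σ_{h∈G} |h·g⟩⟨h|. Let |GHZ_n⟩ = (1/√|G|) Σ_{g∈G} |g⟩^{⊗n} and define |φ_{α, g₂,…,g_n}⟩ = (Z^α ⊗ X_{g₂} ⊗ ⋯ ⊗ X_{g_n}) |GHZ_n⟩. Then: (i) the family {|φ_{α, g₂,…,g_n}⟩}, indexed by one-dimensional characters α of G and elements g₂, …, g_n ∈ G, is orthonormal; and (ii) for every g ∈ G, U_g^{⊗n} |φ_{α, g₂,…,g_n}⟩ = χ_α(g) · |φ_{α,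 g₂,…,g_n}⟩. -/
/-- `ℂ[G]^{⊗n}`, realized as the space of functions on `n`-tuples of group elements,
with orthonormal basis the delta functions `|h₁ … h_n⟩`. -/
abbrev TensorPowSpace (G : Type) (n : ℕ) : Type := (Fin n → G) → ℂ

/-- The `n`-th tensor power `U_g^{⊗n}` of the left regular representation:
`U_g^{⊗n} |h₁ … h_n⟩ = |g h₁, …, g h_n⟩`. -/
def Un (G : Type) [Group G] (n : ℕ) (g : G) :
    TensorPowSpace G n →ₗ[ℂ] TensorPowSpace G n where
  toFun f := fun x => f (fun i => g⁻¹ * x i)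
  map_add' _ _ := rfl
  map_smul' _ _ := rfl

/-- The operator `Z^χ ⊗ X_{g 1} ⊗ ⋯ ⊗ X_{g (n-1)}` (with `g 0 = 1`), where
`Z^χ = ∑_h χ(h⁻¹)|h⟩⟨h|` acts on the first factor and `X_a = ∑_h |h·a⟩⟨h|` is the right
regular representation acting on the remaining factors. -/
def ZXop (G : Type) [Group G] (n : ℕ) [NeZero n] (χ : G →* ℂˣ) (g : Fin n → G) :
    TensorPowSpace G n →ₗ[ℂ] TensorPowSpace G n where
  toFun f := fun x => ((χ (x 0)⁻¹ : ℂˣ) : ℂ) * f (fun i => x i * (g i)⁻¹)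
  map_add' f f' := by
    funext x
    simp [mul_add]
  map_smul' c f := by
    funext x
    simp only [Pi.smul_apply, smul_eq_mul, RingHom.id_apply]
    ring

open Classical in
/-- The normalized GHZ state `|GHZ_n⟩ = |G|^{-1/2} ∑_g |g⟩^{⊗n}`. -/
noncomputable def GHZvec (G : Type) [Group G] [Fintype G] (n : ℕ) [NeZero n] :
    TensorPowSpace G n :=
  fun x => if ∀ i, x i = x 0 then ((Real.sqrt (Fintype.card G) : ℝ) : ℂ)⁻¹ else 0

/-- The state `|φ_{χ,g}⟩ = (Z^χ ⊗ X_{g 1} ⊗ ⋯ ⊗ X_{g (n-1)}) |GHZ_n⟩`. -/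
noncomputable def phiVec (G : Type) [Group G] [Fintype G] (n : ℕ) [NeZero n]
    (χ : G →* ℂˣ) (g : Fin n → G) : TensorPowSpace G n :=
  ZXop G n χ g (GHZvec G n)

/-- The inner product on `ℂ[G]^{⊗n}` for which the delta functions form an orthonormal
basis. -/
noncomputable def hsInner (G : Type) [Fintype G] (n : ℕ) (f f' : TensorPowSpace G n) : ℂ :=
  ∑ x : Fin n → G, (starRingEnd ℂ) (f x) * f' x

/-!
Since `Z^χ ⊗ X_{g 1} ⊗ ⋯` sends `|h … h⟩` to a multiple of `|h, h g 1, …⟩`, the state `|φ_{χ,g}⟩`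
is `|G|^{-1/2} ∑_h χ(h)⁻¹ |h • u⟩`, where `u = (g 0)⁻¹ • g` is the left translate of `g` that
starts at `1`. Distinct tuples starting at `1` lie in disjoint left `G`-orbits, so an inner product
vanishes for distinct `u` and is otherwise a character sum. The symmetry holds because `U_a` fixes
the GHZ state, commutes with each `X_h`, and satisfies `U_a Z^χ = χ(a) Z^χ U_a`.
-/

section Characters

variable {G : Type*} [Group G]

lemma sum_hom_units_mul_inv {R : Type*} [CommRing R] [IsDomain R] [Fintype G]
    (χ χ' : G →* Rˣ) [Decidable (χ = χ')] :
    ∑ h : G, (χ h : R) * ((χ' h)⁻¹ : Rˣ) = if χ = χ' then (Fintype.card G : R) else 0 := by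
  classical
  have trivial_iff : (Units.coeHom R).comp (χ / χ') = 1 ↔ χ = χ' := by
    simp only [DFunLike.ext_iff, MonoidHom.comp_apply, Units.coeHom_apply, MonoidHom.one_apply,
      Units.val_eq_one, MonoidHom.div_apply, div_eq_one]
  simpa [trivial_iff, div_eq_mul_inv] using sum_hom_units ((Units.coeHom R).comp (χ / χ'))

lemma conj_hom_units [Finite G] (χ : G →* ℂˣ) (h : G) :
    starRingEnd ℂ (χ h) = ((χ h)⁻¹ : ℂˣ) := by
  have finite_order : IsOfFinOrder (χ h : ℂ) :=
    ((Units.coeHom ℂ).comp χ).isOfFinOrder (isOfFinOrder_of_finite h)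
  rw [Units.val_inv_eq_inv_val, Complex.inv_eq_conj finite_order.norm_eq_one]

end Characters

section States

variable {G : Type} [Group G] {n : ℕ} [NeZero n]

lemma Un_ZXop (a : G) (χ : G →* ℂˣ) (g : Fin n → G) (f : TensorPowSpace G n) :
    Un G n a (ZXop G n χ g f) = (χ a : ℂ) • ZXop G n χ g (Un G n a f) := by
  funext x
  simp [Un, ZXop, mul_assoc, mul_left_comm]

variable [Fintype G]

open Classical in
lemma Un_GHZvec (a : G) : Un G n a (GHZvec G n) = GHZvec G n := by
  funext x
  simp [Un, GHZvec]

lemma Un_phiVec (a : G) (χ : G →* ℂˣ) (g : Fin n → G) :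
    Un G n a (phiVec G n χ g) = (χ a : ℂ) • phiVec G n χ g := by
  rw [phiVec, Un_ZXop, Un_GHZvec]

open Classical in
lemma phiVec_apply (χ : G →* ℂˣ) (g x : Fin n → G) :
    phiVec G n χ g x = if x = x 0 • (g 0)⁻¹ • g then
      ((χ (x 0))⁻¹ : ℂˣ) * ((Real.sqrt (Fintype.card G) : ℝ) : ℂ)⁻¹ else 0 := by
  have support_iff : (∀ i, x i * (g i)⁻¹ = x 0 * (g 0)⁻¹) ↔ x = x 0 • (g 0)⁻¹ • g := by
    simp [funext_iff, mul_inv_eq_iff_eq_mul, mul_assoc]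
  simp [phiVec, ZXop, GHZvec, support_iff]

open Classical in
lemma phiVec_apply_smul (χ : G →* ℂˣ) (g : Fin n → G) {u : Fin n → G} (hu : u 0 = 1) (h : G) :
    phiVec G n χ g (h • u) = if u = (g 0)⁻¹ • g then
      ((χ h)⁻¹ : ℂˣ) * ((Real.sqrt (Fintype.card G) : ℝ) : ℂ)⁻¹ else 0 := by
  have leading_entry : (h • u) 0 = h := by simp [hu]
  rw [phiVec_apply, leading_entry]
  simp only [smul_left_cancel_iff]

lemma hsInner_phiVec_left (χ : G →* ℂˣ) (g : Fin n → G) (f : TensorPowSpace G n) :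
    hsInner G n (phiVec G n χ g) f =
      ((Real.sqrt (Fintype.card G) : ℝ) : ℂ)⁻¹ * ∑ h : G, (χ h : ℂ) * f (h • (g 0)⁻¹ • g) := by
  have translates_injective : Function.Injective fun h : G => h • (g 0)⁻¹ • g :=
    fun a b hab => by simpa using congrFun hab 0
  rw [hsInner, Finset.mul_sum]
  symm
  refine Fintype.sum_of_injective _ translates_injective _ _ (fun x hx => ?_) (fun h => ?_)
  · rw [phiVec_apply, if_neg fun hxg => hx ⟨x 0, hxg.symm⟩, map_zero, zero_mul]
  · rw [phiVec_apply_smul χ g (by simp), if_pos rfl, map_mul, ← map_inv χ h, conj_hom_units,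
      map_inv, inv_inv, map_inv₀, Complex.conj_ofReal]
    ring

open Classical in
lemma hsInner_phiVec (χ χ' : G →* ℂˣ) (g g' : Fin n → G) :
    hsInner G n (phiVec G n χ g) (phiVec G n χ' g') =
      if χ = χ' ∧ (g 0)⁻¹ • g = (g' 0)⁻¹ • g' then 1 else 0 := by
  have sqrt_mul_sqrt : ((Real.sqrt (Fintype.card G) : ℝ) : ℂ) * (Real.sqrt (Fintype.card G) : ℝ) =
      Fintype.card G := by
    rw [← Complex.ofReal_mul, Real.mul_self_sqrt (Nat.cast_nonneg _), Complex.ofReal_natCast]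
  simp only [hsInner_phiVec_left, phiVec_apply_smul χ' g' (u := (g 0)⁻¹ • g) (by simp)]
  by_cases hg : (g 0)⁻¹ • g = (g' 0)⁻¹ • g'
  · simp only [hg, if_true, and_true, ← mul_assoc, ← Finset.sum_mul, sum_hom_units_mul_inv]
    split_ifs
    · rw [mul_right_comm, ← mul_inv, sqrt_mul_sqrt, inv_mul_cancel₀ (by simp)]
    · simp
  · simp [hg]

open Classical in
theorem phiVec_orthonormal_and_symmetric_general (χ χ' : G →* ℂˣ) (g g' : Fin n → G) :
    (hsInner G n (phiVec G n χ g) (phiVec G n χ' g') =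
      if χ = χ' ∧ (g 0)⁻¹ • g = (g' 0)⁻¹ • g' then 1 else 0) ∧
    ∀ a : G, Un G n a (phiVec G n χ g) = (χ a : ℂ) • phiVec G n χ g :=
  ⟨hsInner_phiVec χ χ' g g', fun a => Un_phiVec a χ g⟩

end States

open Classical in
/-- the family `|φ_{χ,g}⟩ = (Z^χ ⊗ X_{g₂} ⊗ ⋯ ⊗ X_{g_n})|GHZ_n⟩`, indexed by
one-dimensional characters `χ` of `G` and tuples `g` (normalized by `g 0 = 1`), is
orthonormal, and each `|φ_{χ,g}⟩` satisfies `U_a^{⊗n} |φ_{χ,g}⟩ = χ(a)·|φ_{χ,g}⟩`. -/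
theorem phiVec_orthonormal_and_symmetric
    (G : Type) [Group G] [Fintype G] (n : ℕ) [NeZero n]
    (χ χ' : G →* ℂˣ) (g g' : Fin n → G) (hg : g 0 = 1) (hg' : g' 0 = 1) :
    (hsInner G n (phiVec G n χ g) (phiVec G n χ' g')
      = if χ = χ' ∧ g = g' then 1 else 0) ∧
    (∀ a : G, Un G n a (phiVec G n χ g) = ((χ a : ℂˣ) : ℂ) • phiVec G n χ g) := by
  simpa [hg, hg'] using phiVec_orthonormal_and_symmetric_general χ χ' g g'
end
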